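/- Let n ≥ 3 and let Ψ be an automorphism of the left-ideal relation digraph of M_n(F_q). Then there exist an invertible matrix P ∈ M_n(F_q), a field automorphism τ of F_q, and a bijection σ of M_n(F_q) satisfying [σ(X)] = [X] for all X, such that Ψ(X) = (σ(X) entrywise-mapped by τ)·P for every X ∈ M_n(F_q). In particular, [Ψ(X)] = [(X entrywise-mapped by τ)·P] for every X ∈ M_n(F_q). -/

import Mathlib

/-- The left ideal of `M_n(F)` generated by `X`: the set of all `C * X`. -/
def leftIdeal {n : ℕ} {F : Type*} [Field F]
    (X : Matrix (Fin n) (Fin n) F) : Set (Matrix (Fin n) (Fin n) F) :=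
  {A | ∃ C : Matrix (Fin n) (Fin n) F, A = C * X}

/-!
Sending a matrix to its row space identifies left ideals of `M_n(F)` with subspaces of `F ^ n`, so
the digraph is the strict order on subspaces with each vertex blown up. In dimension at least three
a subspace is determined by its strict neighbours in this order: a subspace that is not a line is
the sum of the lines properly inside it, and for two distinct lines some plane contains only the
first. Hence `Ψ` induces an automorphism of the lattice of subspaces, which the fundamental theorem
of projective geometry realises by a semilinear bijection `v ↦ τ(v) P`.

For the fundamental theorem, fix a hyperplane `H`, a vector `u` outside it, and `w` spanning the
image of the line of `u`. The affine chart `u + H` is mapped to `w + φ H` by a formula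
`K ∙ (u + v) ↦ L ∙ (w + g v)`; incidence makes `g` additive on independent pairs, and a third
direction in `H` makes it additive and semilinear on all of `H`.
-/

open Submodule Set

section StrictNeighbors

/-- An order in which an element is determined by the elements strictly below it together with the
elements strictly above it. -/
def SeparatedByStrictNeighbors (L : Type*) [Preorder L] : Prop :=
  ∀ a b : L, Iio a = Iio b → Ioi a = Ioi b → a = b

theorem eq_of_lt_iff_lt {α L M : Type*} [Preorder L] [Preorder M]
    (hM : SeparatedByStrictNeighbors M) {r : α → L} {s : α → M} (hs : s.Surjective)
    (h : ∀ x y, r x < r y ↔ s x < s y) {x y : α} (hxy : r x = r y) : s x = s y := by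
  refine hM _ _ (Set.ext fun b ↦ ?_) (Set.ext fun b ↦ ?_) <;> obtain ⟨z, rfl⟩ := hs b
  · rw [mem_Iio, mem_Iio, ← h, ← h, hxy]
  · rw [mem_Ioi, mem_Ioi, ← h, ← h, hxy]

theorem exists_orderIso_of_lt_iff_lt {α L M : Type*} [PartialOrder L] [PartialOrder M]
    (hL : SeparatedByStrictNeighbors L) (hM : SeparatedByStrictNeighbors M)
    {r : α → L} {s : α → M} (hr : r.Surjective) (hs : s.Surjective)
    (h : ∀ x y, r x < r y ↔ s x < s y) : ∃ φ : L ≃o M, ∀ x, φ (r x) = s x := by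
  have heq (x y) : s x = s y ↔ r x = r y :=
    ⟨eq_of_lt_iff_lt hL hr fun x y ↦ (h x y).symm, eq_of_lt_iff_lt hM hs h⟩
  let r' := Function.surjInv hr
  have hr' (x) : s (r' (r x)) = s x := (heq _ _).2 (Function.surjInv_eq hr _)
  let φ : L ↪o M := OrderEmbedding.ofMapLEIff (s ∘ r') fun a b ↦ by
    rw [Function.comp_apply, Function.comp_apply, le_iff_lt_or_eq, ← h, heq, ← le_iff_lt_or_eq,
      Function.surjInv_eq hr, Function.surjInv_eq hr]
  have hφ : Function.Surjective φ := fun b ↦ by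
    obtain ⟨x, rfl⟩ := hs b
    exact ⟨r x, hr' x⟩
  exact ⟨RelIso.ofSurjective φ hφ, hr'⟩

section IsAtomistic

variable {L : Type*} [PartialOrder L] [OrderBot L] [IsAtomistic L]

theorem le_of_Iio_eq_of_not_isAtom {a b : L} (ha : ¬ IsAtom a) (h : Iio a = Iio b) : a ≤ b := by
  refine le_iff_atom_le_imp.2 fun c hc hca ↦ ?_
  have hlt : c < a := hca.lt_of_ne (by rintro rfl; exact ha hc)
  exact (h.subset hlt : c < b).le

theorem eq_of_Iio_eq_of_Ioi_eq_of_not_isAtom {a b : L} (ha : ¬ IsAtom a) (hlow : Iio a = Iio b)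
    (hup : Ioi a = Ioi b) : a = b :=
  (le_of_Iio_eq_of_not_isAtom ha hlow).eq_of_not_lt fun h ↦ lt_irrefl b (hup.subset h)

end IsAtomistic

theorem separatedByStrictNeighbors_of_sup_atoms_ne_top {L : Type*} [Lattice L] [BoundedOrder L]
    [IsAtomistic L] [IsUpperModularLattice L]
    (hL : ∀ a b : L, IsAtom a → IsAtom b → a ⊔ b ≠ ⊤) : SeparatedByStrictNeighbors L := by
  intro a b hlow hup
  by_cases ha : IsAtom a
  swap
  · exact eq_of_Iio_eq_of_Ioi_eq_of_not_isAtom ha hlow hup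
  by_cases hb : IsAtom b
  swap
  · exact (eq_of_Iio_eq_of_Ioi_eq_of_not_isAtom hb hlow.symm hup.symm).symm
  obtain ⟨c, hc, hcab⟩ : ∃ c, IsAtom c ∧ ¬ c ≤ a ⊔ b := by
    by_contra! h
    exact hL a b ha hb (top_le_iff.1 (le_iff_atom_le_imp.2 fun c hc _ ↦ h c hc))
  have covBy_sup {c : L} (hc : IsAtom c) (hca : a ≠ c) : a ⋖ a ⊔ c := by
    have hinf : a ⊓ c = ⊥ := (ha.disjoint_of_ne hc hca).eq_bot
    exact covBy_sup_of_inf_covBy_right (hinf ▸ hc.bot_covBy)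
  by_contra hab
  have hac : a ⋖ a ⊔ c := covBy_sup hc (by rintro rfl; exact hcab le_sup_left)
  have hbc : b < a ⊔ c := hup.subset hac.lt
  have hle : a ⊔ b ≤ a ⊔ c := sup_le le_sup_left hbc.le
  have heq : a ⊔ b = a ⊔ c :=
    (hac.eq_or_eq le_sup_left hle).resolve_left (covBy_sup hb hab).ne'
  exact hcab (heq ▸ le_sup_right)

end StrictNeighbors

section Dimension

variable {K V : Type*} [DivisionRing K] [AddCommGroup V] [Module K V]

theorem span_pair_ne_top (hV : 3 ≤ Module.rank K V) (u v : V) : span K {u, v} ≠ ⊤ := by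
  classical
  intro h
  have hle : Module.rank K (span K {u, v}) ≤ 2 := by
    have := rank_span_finset_le (R := K) ({u, v} : Finset V)
    rw [Finset.coe_pair] at this
    exact this.trans (mod_cast Finset.card_le_two)
  rw [h, rank_top] at hle
  exact absurd (hV.trans hle) (by norm_num)

theorem separatedByStrictNeighbors_submodule (hV : 3 ≤ Module.rank K V) :
    SeparatedByStrictNeighbors (Submodule K V) := by
  refine separatedByStrictNeighbors_of_sup_atoms_ne_top fun a b ha hb ↦ ?_
  obtain ⟨u, -, rfl⟩ := (atom_iff_nonzero_span a).1 ha
  obtain ⟨v, -, rfl⟩ := (atom_iff_nonzero_span b).1 hb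
  rw [← span_insert]
  exact span_pair_ne_top hV u v

end Dimension

section LinePreserving

variable {K L V W : Type*} [DivisionRing K] [DivisionRing L] [AddCommGroup V] [Module K V]
  [AddCommGroup W] [Module L W]

theorem linearIndependent_pair_of_notMem_span_singleton {u v : V} (hu : u ≠ 0)
    (hv : v ∉ K ∙ u) : LinearIndependent K ![u, v] :=
  (LinearIndependent.pair_iff' hu).2 fun a ha ↦ hv (mem_span_singleton.2 ⟨a, ha⟩)

theorem exists_notMem_span_singleton (hV : ∀ u : V, K ∙ u ≠ ⊤) (u : V) : ∃ v, v ∉ K ∙ u := by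
  simpa [eq_top_iff'] using hV u

theorem ne_zero_of_notMem_span_singleton {u v : V} (h : v ∉ K ∙ u) : v ≠ 0 := by
  rintro rfl
  exact h (zero_mem _)

theorem map_add_of_forall_notMem_span_singleton (hV : ∀ u : V, K ∙ u ≠ ⊤) {g : V → W}
    (hg : ∀ u v, v ∉ K ∙ u → g (u + v) = g u + g v) (u v : V) : g (u + v) = g u + g v := by
  by_cases hvu : v ∈ K ∙ u
  swap
  · exact hg u v hvu
  obtain ⟨w, hw⟩ := exists_notMem_span_singleton hV u
  have notMem_span {x : V} (hx : x ∈ K ∙ u) : w ∉ K ∙ x := fun h ↦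
    hw ((span_singleton_le_iff_mem _ _).2 hx h)
  have hvw : v + w ∉ K ∙ u := fun h ↦ hw ((Submodule.add_mem_iff_right _ hvu).1 h)
  apply add_right_cancel (b := g w)
  calc g (u + v) + g w = g (u + (v + w)) := by
        rw [← hg _ _ (notMem_span (add_mem (mem_span_singleton_self u) hvu)), add_assoc]
    _ = g u + g v + g w := by rw [hg _ _ hvw, hg _ _ (notMem_span hvu), add_assoc]

section Semilinear

variable {g : V →+ W}

theorem map_smul_eq_of_notMem_span_singleton (hline : ∀ (a : K) v, g (a • v) ∈ L ∙ g v)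
    {u v : V} (hind : LinearIndependent L ![g u, g v]) {a : K} {t : L}
    (hu : g (a • u) = t • g u) : g (a • v) = t • g v := by
  obtain ⟨s, hs⟩ := mem_span_singleton.1 (hline a v)
  obtain ⟨r, hr⟩ := mem_span_singleton.1 (hline a (u + v))
  have h : r • g u + r • g v = t • g u + s • g v := by
    rw [← smul_add, ← map_add, hr, smul_add, map_add, hu, hs]
  obtain ⟨rfl, rfl⟩ := hind.eq_of_pair h
  exact hs.symm

theorem exists_map_smul_eq (hV : ∀ u : V, K ∙ u ≠ ⊤)
    (hline : ∀ (a : K) v, g (a • v) ∈ L ∙ g v) (hind : ∀ u v, v ∉ K ∙ u → g v ∉ L ∙ g u) (a : K) :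
    ∃ t : L, ∀ v, g (a • v) = t • g v := by
  have hind' {u v : V} (hu : u ≠ 0) (hv : v ∉ K ∙ u) : LinearIndependent L ![g u, g v] :=
    linearIndependent_pair_of_notMem_span_singleton
      (ne_zero_of_notMem_span_singleton (hind 0 u (by simpa using hu))) (hind u v hv)
  obtain ⟨u, hu⟩ := exists_notMem_span_singleton hV 0
  have hu0 := ne_zero_of_notMem_span_singleton hu
  obtain ⟨t, ht⟩ := mem_span_singleton.1 (hline a u)
  refine ⟨t, fun v ↦ ?_⟩
  by_cases hvu : v ∈ K ∙ u
  swap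
  · exact map_smul_eq_of_notMem_span_singleton hline (hind' hu0 hvu) ht.symm
  obtain rfl | hv0 := eq_or_ne v 0
  · simp only [smul_zero, map_zero]
  obtain ⟨w, hwu⟩ := exists_notMem_span_singleton hV u
  have hwv : w ∉ K ∙ v := fun h ↦ hwu ((span_singleton_le_iff_mem _ _).2 hvu h)
  have hw := map_smul_eq_of_notMem_span_singleton hline (hind' hu0 hwu) ht.symm
  exact map_smul_eq_of_notMem_span_singleton hline
    (LinearIndependent.pair_symm_iff.1 (hind' hv0 hwv)) hw

theorem exists_ringHom_map_smul (hV : ∀ u : V, K ∙ u ≠ ⊤)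
    (hline : ∀ (a : K) v, g (a • v) ∈ L ∙ g v) (hind : ∀ u v, v ∉ K ∙ u → g v ∉ L ∙ g u) :
    ∃ τ : K →+* L, ∀ a v, g (a • v) = τ a • g v := by
  choose t ht using exists_map_smul_eq hV hline hind
  obtain ⟨e, he⟩ := exists_notMem_span_singleton hV 0
  have hinj : Function.Injective fun a : L ↦ a • g e :=
    smul_left_injective L (ne_zero_of_notMem_span_singleton (hind 0 e he))
  exact ⟨{
    toFun := t
    map_one' := hinj <| by simp only [← ht, one_smul]
    map_zero' := hinj <| by simp only [← ht, zero_smul, map_zero]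
    map_mul' a b := hinj <| by simp only [mul_smul, ← ht]
    map_add' a b := hinj <| by simp only [add_smul, map_add, ← ht] }, ht⟩

end Semilinear

end LinePreserving

section FundamentalTheorem

variable {K L V W : Type*} [DivisionRing K] [DivisionRing L] [AddCommGroup V] [Module K V]
  [AddCommGroup W] [Module L W] (φ : Submodule K V ≃o Submodule L W)

theorem map_span_singleton_eq_of_mem {v : V} {w : W} (hw : w ∈ φ (K ∙ v)) (hw0 : w ≠ 0) :
    φ (K ∙ v) = L ∙ w := by
  have hv0 : v ≠ 0 := by
    rintro rfl
    simp [hw0] at hw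
  have hatom : IsAtom (φ (K ∙ v)) := (φ.isAtom_iff _).2 (nonzero_span_atom v hv0)
  refine ((hatom.le_iff.1 ((span_singleton_le_iff_mem _ _).2 hw)).resolve_left ?_).symm
  rwa [span_singleton_eq_bot]

theorem exists_map_span_singleton_eq (v : V) : ∃ w, φ (K ∙ v) = L ∙ w := by
  by_cases h : φ (K ∙ v) = ⊥
  · exact ⟨0, by rw [h, span_zero_singleton]⟩
  · obtain ⟨w, hw, hw0⟩ := (Submodule.ne_bot_iff _).1 h
    exact ⟨w, map_span_singleton_eq_of_mem φ hw hw0⟩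

variable {φ}

theorem map_span_singleton_le_iff {v : V} {U : Submodule K V} : φ (K ∙ v) ≤ φ U ↔ v ∈ U := by
  rw [φ.le_iff_le, span_singleton_le_iff_mem]

theorem mem_map_iff_mem {v : V} {w : W} (h : φ (K ∙ v) = L ∙ w) {U : Submodule K V} :
    w ∈ φ U ↔ v ∈ U := by
  rw [← span_singleton_le_iff_mem, ← h, map_span_singleton_le_iff]

theorem map_span_singleton_add_le (u v : V) : φ (K ∙ (u + v)) ≤ φ (K ∙ u) ⊔ φ (K ∙ v) := by
  rw [← φ.map_sup, map_span_singleton_le_iff]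
  exact add_mem_sup (mem_span_singleton_self u) (mem_span_singleton_self v)

theorem exists_map_span_singleton_add_eq {u v : V} {w : W} (hw : φ (K ∙ u) = L ∙ w)
    (hu : u ∉ K ∙ v) : ∃ y ∈ φ (K ∙ v), φ (K ∙ (u + v)) = L ∙ (w + y) := by
  obtain ⟨p, hp⟩ := exists_map_span_singleton_eq φ (u + v)
  have hmem : p ∈ L ∙ w ⊔ φ (K ∙ v) := by
    rw [← hw]
    exact map_span_singleton_add_le u v (hp ▸ mem_span_singleton_self p)
  obtain ⟨q, hq, y, hy, rfl⟩ := mem_sup.1 hmem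
  obtain ⟨a, rfl⟩ := mem_span_singleton.1 hq
  have ha : a ≠ 0 := by
    rintro rfl
    have huv : u + v ∈ K ∙ v := (mem_map_iff_mem hp).1 (by rwa [zero_smul, zero_add])
    exact hu ((Submodule.add_mem_iff_left _ (mem_span_singleton_self v)).1 huv)
  refine ⟨a⁻¹ • y, smul_mem _ _ hy, ?_⟩
  rw [hp, ← span_singleton_smul_eq (IsUnit.mk0 _ (inv_ne_zero ha)), smul_add, inv_smul_smul₀ ha]

variable (φ) in
/-- `g` describes the action of `φ` in the affine charts `u + H` and `w + φ H` of the projective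
spaces of `V` and `W`: the point of `u + v` goes to that of `w + g v`, and directions are respected.
Taking `v = 0` shows that `φ` sends the point of `u` to that of `w`. -/
structure IsAffineForm {H : Submodule K V} (u : V) (w : W) (g : H → W) : Prop where
  notMem : u ∉ H
  mem_map (v : H) : g v ∈ φ (K ∙ (v : V))
  map_span_add (v : H) : φ (K ∙ (u + v)) = L ∙ (w + g v)

theorem exists_isAffineForm {H : Submodule K V} {u : V} {w : W} (hu : u ∉ H)
    (hw : φ (K ∙ u) = L ∙ w) : ∃ g : H → W, IsAffineForm φ u w g := by
  have hspan (v : H) : u ∉ K ∙ (v : V) := fun h ↦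
    hu ((span_singleton_le_iff_mem _ _).2 v.2 h)
  choose g hg hg' using fun v : H ↦ exists_map_span_singleton_add_eq hw (hspan v)
  exact ⟨g, hu, hg, hg'⟩

namespace IsAffineForm

variable {H : Submodule K V} {u : V} {w : W} {g : H → W}

protected theorem map_zero (hg : IsAffineForm φ u w g) : g 0 = 0 := by
  simpa using hg.mem_map 0

theorem map_span_base (hg : IsAffineForm φ u w g) : φ (K ∙ u) = L ∙ w := by
  simpa [hg.map_zero] using hg.map_span_add 0

theorem map_span (hg : IsAffineForm φ u w g) (v : H) : φ (K ∙ (v : V)) = L ∙ g v := by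
  by_cases hgv : g v = 0
  · have huv : u + v ∈ K ∙ u := by
      rw [← map_span_singleton_le_iff (φ := φ), hg.map_span_add, hg.map_span_base, hgv, add_zero]
    have hvu : (v : V) ∈ K ∙ u :=
      (Submodule.add_mem_iff_right _ (mem_span_singleton_self u)).1 huv
    have hv : (v : V) = 0 :=
      disjoint_def.1 (disjoint_span_singleton_of_notMem hg.notMem) v v.2 hvu
    rw [hv, hgv, span_zero_singleton, span_zero_singleton, φ.map_bot]
  · exact map_span_singleton_eq_of_mem φ (hg.mem_map v) hgv

theorem apply_mem_map (hg : IsAffineForm φ u w g) (v : H) : g v ∈ φ H :=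
  (mem_map_iff_mem (hg.map_span v)).2 v.2

theorem mem_span_singleton_iff (hg : IsAffineForm φ u w g) {x y : H} :
    g y ∈ L ∙ g x ↔ y ∈ K ∙ x := by
  rw [← hg.map_span x, mem_map_iff_mem (hg.map_span y)]
  simp only [mem_span_singleton, Subtype.ext_iff, coe_smul]

theorem exists_map_add_eq_add_smul (hg : IsAffineForm φ u w g) (x y : H) :
    ∃ b : L, g (x + y) = g x + b • g y := by
  have hmem : w + g (x + y) ∈ L ∙ (w + g x) ⊔ L ∙ g y := by
    rw [← hg.map_span_add, ← hg.map_span]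
    apply map_span_singleton_add_le
    rw [add_assoc, ← coe_add, hg.map_span_add]
    exact mem_span_singleton_self _
  obtain ⟨a, b, hab⟩ : ∃ a b : L, a • (w + g x) + b • g y = w + g (x + y) := by
    rwa [← span_insert, mem_span_pair] at hmem
  have hw : w ∉ φ H := fun h ↦ hg.notMem ((mem_map_iff_mem hg.map_span_base).1 h)
  have ha : a = 1 := by
    by_contra ha
    have hdiff : (a - 1) • w = g (x + y) - (a • g x + b • g y) := by
      rw [sub_smul, one_smul, sub_eq_sub_iff_add_eq_add, ← add_assoc, ← smul_add, hab, add_comm]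
    refine hw (((φ H).smul_mem_iff (sub_ne_zero.2 ha)).1 ?_)
    rw [hdiff]
    exact sub_mem (hg.apply_mem_map _) (add_mem (smul_mem _ _ (hg.apply_mem_map _))
      (smul_mem _ _ (hg.apply_mem_map _)))
  refine ⟨b, add_left_cancel (a := w) ?_⟩
  rw [← hab, ha, one_smul, add_assoc]

theorem map_add_of_notMem_span_singleton (hg : IsAffineForm φ u w g) {x y : H}
    (hxy : y ∉ K ∙ x) : g (x + y) = g x + g y := by
  obtain rfl | hx := eq_or_ne x 0
  · rw [hg.map_zero, zero_add, zero_add]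
  have hgx : g x ≠ 0 := ne_zero_of_notMem_span_singleton (u := g 0) fun h ↦
    hx (by simpa using hg.mem_span_singleton_iff.1 h)
  have hind : LinearIndependent L ![g x, g y] :=
    linearIndependent_pair_of_notMem_span_singleton hgx (mt hg.mem_span_singleton_iff.1 hxy)
  obtain ⟨b, hb⟩ := hg.exists_map_add_eq_add_smul x y
  obtain ⟨d, hd⟩ := hg.exists_map_add_eq_add_smul y x
  have h : (1 : L) • g x + b • g y = d • g x + (1 : L) • g y := by
    rw [one_smul, one_smul, ← hb, add_comm x, hd, add_comm]
  rw [hb, (hind.eq_of_pair h).2, one_smul]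

theorem exists_semilinearMap (hg : IsAffineForm φ u w g) (hH : ∀ x : H, K ∙ x ≠ ⊤) :
    ∃ (τ : K →+* L) (f : H →ₛₗ[τ] W), IsAffineForm φ u w f := by
  let f : H →+ W := AddMonoidHom.mk' g
    (map_add_of_forall_notMem_span_singleton hH fun _ _ ↦ hg.map_add_of_notMem_span_singleton)
  obtain ⟨τ, hτ⟩ := exists_ringHom_map_smul (L := L) (g := f) hH
    (fun a v ↦ hg.mem_span_singleton_iff.2 (smul_mem _ a (mem_span_singleton_self v)))
    (fun x y ↦ mt hg.mem_span_singleton_iff.1)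
  exact ⟨τ, { f with map_smul' := hτ }, hg⟩

theorem map_span_smul_add {τ : K →+* L} {g : H →ₛₗ[τ] W} (hg : IsAffineForm φ u w g) (a : K)
    (v : H) : φ (K ∙ (a • u + v)) = L ∙ (τ a • w + g v) := by
  obtain rfl | ha := eq_or_ne a 0
  · rw [zero_smul, zero_add, hg.map_span, map_zero, zero_smul, zero_add]
  have hleft : a • u + v = a • (u + (a⁻¹ • v : H)) := by
    rw [smul_add, coe_smul, smul_inv_smul₀ ha]
  have hright : τ a • w + g v = τ a • (w + g (a⁻¹ • v)) := by
    rw [smul_add, ← map_smulₛₗ, smul_inv_smul₀ ha]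
  have ha' : IsUnit a := IsUnit.mk0 a ha
  rw [hleft, hright, span_singleton_smul_eq ha', span_singleton_smul_eq (ha'.map τ),
    hg.map_span_add]

end IsAffineForm

theorem exists_linearMap_apply_eq_one {u : V} (hu : u ≠ 0) : ∃ l : V →ₗ[K] K, l u = 1 := by
  obtain ⟨l, hl⟩ := (LinearMap.toSpanSingleton K V u).exists_leftInverse_of_injective
    (LinearMap.ker_toSpanSingleton K hu)
  exact ⟨l, by simpa using LinearMap.congr_fun hl 1⟩

theorem exists_semilinearMap_map_span_singleton (hV : ∀ u v : V, span K {u, v} ≠ ⊤)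
    (φ : Submodule K V ≃o Submodule L W) :
    ∃ (τ : K →+* L) (f : V →ₛₗ[τ] W), ∀ x, φ (K ∙ x) = L ∙ f x := by
  obtain ⟨u, hu⟩ : ∃ u, u ∉ span K {(0 : V), 0} := by simpa [eq_top_iff'] using hV 0 0
  obtain ⟨l, hl⟩ := exists_linearMap_apply_eq_one (K := K) (u := u) (by rintro rfl; simp at hu)
  let H := LinearMap.ker l
  let p : V →ₗ[K] H := (LinearMap.id - l.smulRight u).codRestrict H fun x ↦ by simp [H, hl]
  have hp (x : V) : l x • u + p x = x := add_sub_cancel _ _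
  have hH (v : H) : K ∙ v ≠ ⊤ := fun h ↦ hV u v <| by
    refine eq_top_iff'.2 fun x ↦ mem_span_pair.2 ?_
    obtain ⟨b, hb⟩ := mem_span_singleton.1 (h ▸ mem_top : p x ∈ K ∙ v)
    exact ⟨l x, b, by rw [← coe_smul, hb, hp]⟩
  obtain ⟨w, hw⟩ := exists_map_span_singleton_eq φ u
  obtain ⟨g₀, hg₀⟩ := exists_isAffineForm (H := H) (by simp [H, hl]) hw
  obtain ⟨τ, g, hg⟩ := hg₀.exists_semilinearMap hH
  refine ⟨τ, (LinearMap.toSpanSingleton L W w).comp (τ.toSemilinearMap.comp l) + g.comp p,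
    fun x ↦ ?_⟩
  have hx := hg.map_span_smul_add (l x) (p x)
  rwa [hp] at hx

section SemilinearMap

variable {τ : K →+* L} {f : V →ₛₗ[τ] W}

theorem injective_of_map_span_singleton (hf : ∀ x, φ (K ∙ x) = L ∙ f x) :
    Function.Injective f := by
  refine (injective_iff_map_eq_zero f).2 fun x hx ↦ span_singleton_eq_bot.1 (φ.injective ?_)
  rw [hf, hx, span_zero_singleton, φ.map_bot]

theorem surjective_ringHom_of_map_span_singleton (hV : ∀ u : V, K ∙ u ≠ ⊤)
    (hf : ∀ x, φ (K ∙ x) = L ∙ f x) : Function.Surjective τ := by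
  intro c
  obtain ⟨x, hx⟩ := exists_notMem_span_singleton hV 0
  obtain ⟨y, hy⟩ := exists_notMem_span_singleton hV x
  have hfx : f x ≠ 0 := (map_ne_zero_iff f (injective_of_map_span_singleton hf)).2
    (ne_zero_of_notMem_span_singleton hx)
  have hfy : f y ∉ L ∙ f x := by rwa [← hf x, mem_map_iff_mem (hf y)]
  have hind : LinearIndependent L ![f x, f y] :=
    linearIndependent_pair_of_notMem_span_singleton hfx hfy
  obtain ⟨z, hz⟩ := exists_map_span_singleton_eq φ.symm (f x + c • f y)
  rw [φ.symm_apply_eq] at hz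
  have hzxy : z ∈ span K {x, y} := by
    rw [span_insert, ← map_span_singleton_le_iff (φ := φ), ← hz, φ.map_sup, hf, hf,
      span_singleton_le_iff_mem]
    exact add_mem_sup (mem_span_singleton_self _) (smul_mem _ _ (mem_span_singleton_self _))
  obtain ⟨a, b, rfl⟩ := mem_span_pair.1 hzxy
  obtain ⟨d, hd⟩ := mem_span_singleton.1 ((hz.trans (hf _)).le (mem_span_singleton_self _))
  have hcoeff : (d * τ a) • f x + (d * τ b) • f y = (1 : L) • f x + c • f y := by
    rw [one_smul, ← hd, map_add, map_smulₛₗ, map_smulₛₗ, smul_add, mul_smul, mul_smul]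
  obtain ⟨hda, hdb⟩ := hind.eq_of_pair hcoeff
  refine ⟨a⁻¹ * b, ?_⟩
  rw [map_mul, map_inv₀, ← eq_inv_of_mul_eq_one_left hda, hdb]

theorem surjective_of_map_span_singleton (hτ : Function.Surjective τ)
    (hf : ∀ x, φ (K ∙ x) = L ∙ f x) : Function.Surjective f := by
  intro w
  obtain ⟨x, hx⟩ := exists_map_span_singleton_eq φ.symm w
  rw [φ.symm_apply_eq, hf] at hx
  obtain ⟨c, hc⟩ := mem_span_singleton.1 (hx.le (mem_span_singleton_self w))
  obtain ⟨a, rfl⟩ := hτ c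
  exact ⟨a • x, by rw [map_smulₛₗ, hc]⟩

theorem eq_map_of_map_span_singleton [RingHomSurjective τ] (hf : ∀ x, φ (K ∙ x) = L ∙ f x)
    (hsurj : Function.Surjective f) (U : Submodule K V) : φ U = U.map f := by
  ext w
  obtain ⟨x, rfl⟩ := hsurj w
  exact (mem_map_iff_mem (hf x)).trans (injective_of_map_span_singleton hf).mem_set_image.symm

end SemilinearMap

/-- The fundamental theorem of projective geometry. -/
theorem exists_semilinearMap_of_orderIso (hV : 3 ≤ Module.rank K V)
    (φ : Submodule K V ≃o Submodule L W) :
    ∃ (τ : K ≃+* L) (f : V →ₛₗ[(τ : K →+* L)] W), Function.Bijective f ∧ ∀ U, φ U = U.map f := by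
  obtain ⟨τ, f, hf⟩ := exists_semilinearMap_map_span_singleton (span_pair_ne_top hV) φ
  have hτ : Function.Surjective τ := surjective_ringHom_of_map_span_singleton
    (fun u ↦ by simpa using span_pair_ne_top hV u u) hf
  have hsurj := surjective_of_map_span_singleton hτ hf
  have : RingHomSurjective τ := ⟨hτ⟩
  exact ⟨RingEquiv.ofBijective τ ⟨τ.injective, hτ⟩, f,
    ⟨injective_of_map_span_singleton hf, hsurj⟩, eq_map_of_map_span_singleton hf hsurj⟩

end FundamentalTheorem

section RowSpace

variable {l m n R S : Type*}

/-- The subspace spanned by the rows of a matrix. -/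
def rowSpace [Semiring R] (X : Matrix m n R) : Submodule R (n → R) :=
  span R (range X.row)

theorem mem_rowSpace [Semiring R] [Fintype m] {X : Matrix m n R} {v : n → R} :
    v ∈ rowSpace X ↔ ∃ c, Matrix.vecMul c X = v := by
  rw [rowSpace, ← range_vecMulLinear]
  rfl

theorem rowSpace_le_rowSpace_iff [Semiring R] [Fintype m] {X : Matrix l n R} {Y : Matrix m n R} :
    rowSpace X ≤ rowSpace Y ↔ ∃ C : Matrix l m R, X = C * Y := by
  rw [rowSpace, span_le, range_subset_iff]
  simp only [SetLike.mem_coe, mem_rowSpace]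
  refine ⟨fun h ↦ ?_, fun ⟨C, hC⟩ i ↦ ⟨C i, by rw [hC]; rfl⟩⟩
  choose C hC using h
  exact ⟨Matrix.of C, Matrix.ext_row fun i ↦ (hC i).symm⟩

theorem rowSpace_surjective [DivisionRing R] [Finite n] :
    Function.Surjective (rowSpace : Matrix n n R → Submodule R (n → R)) := by
  classical
  have := Fintype.ofFinite n
  intro U
  obtain ⟨U', hU⟩ := U.exists_isCompl
  refine ⟨LinearMap.toMatrixRight' (U.projection U' hU), ?_⟩
  rw [rowSpace, ← range_vecMulLinear]
  exact (congrArg LinearMap.range (LinearMap.toMatrixRight'.symm_apply_apply _)).trans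
    (range_projection hU)

section Semilinear

variable [Semiring R] [Semiring S] {τ : R →+* S} [DecidableEq m]

/-- The matrix `P` through which a semilinear map acts on row vectors, as `v ↦ τ(v) P`. -/
def rightMatrix (f : (m → R) →ₛₗ[τ] (n → S)) : Matrix m n S :=
  Matrix.of fun i ↦ f (Pi.single i 1)

variable [Fintype m] (f : (m → R) →ₛₗ[τ] (n → S))

theorem vecMul_rightMatrix (v : m → R) : Matrix.vecMul (τ ∘ v) (rightMatrix f) = f v := by
  conv_rhs => rw [← Finset.univ_sum_single v]
  rw [map_sum, Matrix.vecMul_eq_sum]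
  refine Finset.sum_congr rfl fun i _ ↦ ?_
  change τ (v i) • f (Pi.single i 1) = f (Pi.single i (v i))
  rw [← map_smulₛₗ, ← Pi.single_smul, smul_eq_mul, mul_one]

theorem rowSpace_map_mul_rightMatrix [RingHomSurjective τ] (X : Matrix l m R) :
    rowSpace (X.map τ * rightMatrix f) = (rowSpace X).map f := by
  have hrow : (X.map τ * rightMatrix f).row = f ∘ X.row :=
    funext fun i ↦ vecMul_rightMatrix f (X i)
  rw [rowSpace, rowSpace, map_span, ← range_comp, hrow]

end Semilinear

theorem isUnit_rightMatrix [Semiring R] [CommRing S] [Fintype n] [DecidableEq n] {τ : R →+* S}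
    {f : (n → R) →ₛₗ[τ] (n → S)} (hf : Function.Surjective f) : IsUnit (rightMatrix f) :=
  Matrix.vecMul_surjective_iff_isUnit.1 fun y ↦
    let ⟨x, hx⟩ := hf y
    ⟨τ ∘ x, (vecMul_rightMatrix f x).trans hx⟩

end RowSpace

section LeftIdeal

variable {n : ℕ} {F : Type*} [Field F] {X Y : Matrix (Fin n) (Fin n) F}

theorem leftIdeal_subset_iff : leftIdeal X ⊆ leftIdeal Y ↔ rowSpace X ≤ rowSpace Y := by
  rw [rowSpace_le_rowSpace_iff]
  refine ⟨fun h ↦ h ⟨1, (one_mul X).symm⟩, ?_⟩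
  rintro ⟨C, rfl⟩ _ ⟨D, rfl⟩
  exact ⟨D * C, (mul_assoc _ _ _).symm⟩

theorem leftIdeal_ssubset_iff : leftIdeal X ⊂ leftIdeal Y ↔ rowSpace X < rowSpace Y := by
  rw [ssubset_iff_subset_not_subset, lt_iff_le_not_ge, leftIdeal_subset_iff, leftIdeal_subset_iff]

theorem leftIdeal_eq_iff : leftIdeal X = leftIdeal Y ↔ rowSpace X = rowSpace Y := by
  rw [Subset.antisymm_iff, le_antisymm_iff, leftIdeal_subset_iff, leftIdeal_subset_iff]

end LeftIdeal

theorem stmt_15_general {n : ℕ} (hn : 3 ≤ n) {F : Type*} [Field F]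
    (Ψ : Matrix (Fin n) (Fin n) F → Matrix (Fin n) (Fin n) F)
    (hbij : Function.Bijective Ψ)
    (hedge : ∀ X Y : Matrix (Fin n) (Fin n) F,
      leftIdeal X ⊂ leftIdeal Y ↔ leftIdeal (Ψ X) ⊂ leftIdeal (Ψ Y)) :
    ∃ (P : Matrix (Fin n) (Fin n) F) (τ : F ≃+* F)
      (σ : Matrix (Fin n) (Fin n) F → Matrix (Fin n) (Fin n) F),
      IsUnit P ∧ Function.Bijective σ ∧
      (∀ X : Matrix (Fin n) (Fin n) F, leftIdeal (σ X) = leftIdeal X) ∧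
      (∀ X : Matrix (Fin n) (Fin n) F, Ψ X = (σ X).map (τ : F → F) * P) ∧
      (∀ X : Matrix (Fin n) (Fin n) F,
        leftIdeal (Ψ X) = leftIdeal (X.map (τ : F → F) * P)) := by
  have hn' : 3 ≤ Module.rank F (Fin n → F) := by simpa using hn
  have hsep := separatedByStrictNeighbors_submodule hn'
  obtain ⟨φ, hφ⟩ : ∃ φ : Submodule F (Fin n → F) ≃o Submodule F (Fin n → F),
      ∀ X, φ (rowSpace X) = rowSpace (Ψ X) :=
    exists_orderIso_of_lt_iff_lt hsep hsep rowSpace_surjective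
      (rowSpace_surjective.comp hbij.surjective)
      fun X Y ↦ leftIdeal_ssubset_iff.symm.trans ((hedge X Y).trans leftIdeal_ssubset_iff)
  obtain ⟨τ, f, hf, hφf⟩ := exists_semilinearMap_of_orderIso hn' φ
  have hP := isUnit_rightMatrix hf.surjective
  have hrow (X : Matrix (Fin n) (Fin n) F) :
      rowSpace (X.map τ * rightMatrix f) = φ (rowSpace X) :=
    (rowSpace_map_mul_rightMatrix f X).trans (hφf _).symm
  let T : Matrix (Fin n) (Fin n) F ≃ Matrix (Fin n) (Fin n) F :=
    τ.toEquiv.mapMatrix.trans hP.unit.mulRight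
  have hΨ (X : Matrix (Fin n) (Fin n) F) : Ψ X = (T.symm (Ψ X)).map τ * rightMatrix f :=
    (T.apply_symm_apply (Ψ X)).symm
  refine ⟨rightMatrix f, τ, T.symm ∘ Ψ, hP, T.symm.bijective.comp hbij, fun X ↦ ?_, hΨ,
    fun X ↦ leftIdeal_eq_iff.2 ((hφ X).symm.trans (hrow X).symm)⟩
  rw [leftIdeal_eq_iff, ← φ.injective.eq_iff, hφ X, ← hrow, Function.comp_apply, ← hΨ]

/-- Main theorem: for `n ≥ 3`, every automorphism `Ψ` of the left-ideal relation
digraph of `M_n(F_q)` decomposes as `Ψ(X) = (τ applied entrywise to σ(X)) * P`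
where `P` is invertible, `τ` is a field automorphism of `F_q`, and `σ` is a
bijection preserving each left ideal `[X]`. -/
theorem stmt_15 {n : ℕ} (hn : 3 ≤ n) {F : Type*} [Field F] [Fintype F]
    (Ψ : Matrix (Fin n) (Fin n) F → Matrix (Fin n) (Fin n) F)
    (hbij : Function.Bijective Ψ)
    (hedge : ∀ X Y : Matrix (Fin n) (Fin n) F,
      leftIdeal X ⊂ leftIdeal Y ↔ leftIdeal (Ψ X) ⊂ leftIdeal (Ψ Y)) :
    ∃ (P : Matrix (Fin n) (Fin n) F) (τ : F ≃+* F)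
      (σ : Matrix (Fin n) (Fin n) F → Matrix (Fin n) (Fin n) F),
      IsUnit P ∧ Function.Bijective σ ∧
      (∀ X : Matrix (Fin n) (Fin n) F, leftIdeal (σ X) = leftIdeal X) ∧
      (∀ X : Matrix (Fin n) (Fin n) F, Ψ X = (σ X).map (τ : F → F) * P) ∧
      (∀ X : Matrix (Fin n) (Fin n) F,
        leftIdeal (Ψ X) = leftIdeal (X.map (τ : F → F) * P)) :=
  stmt_15_general hn Ψ hbij hedge
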